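/- In the m-player game, for every 1 ≤ i ≤ m and every s ∈ [−1,1], P(A_i) s^{l_i} = Σ_{j=1}^{m} g_τ^{A_j}(s) · ( P(A_i) s^{l_i} + (1 − s) w_{A_i}^{A_j}(s) ), where g_τ^{A_j}(s) = Σ_{n≥0} p_n^{A_j} s^n. -/

import Mathlib

/-! Fix the pattern `A i`, of length `l`, and let `u n` be the probability that no pattern has
occurred by toss `n`, and `q j n` the probability that the game ends at toss `n` with `A j`.
The event "no pattern by toss `n`, and the next `l` tosses spell `A i`" has probability
`u n * P(A i)` (`measure_spells`). On it the game ends at some toss `n + k` with `1 ≤ k ≤ l`, won by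
one player `j`; since no pattern is a substring of another, `A j` must overlap the block in exactly
its first `k` letters, so the length-`k` suffix of `A j` is the length-`k` prefix of `A i`, and only
the remaining letters `(A i).drop k` are still to be tossed. This gives (`renewal`)
`u n * P(A i) = ∑_j ∑_k [match] * q j (n + k) * P((A i).drop k)`.
Multiplying by `s ^ (n + l)` and summing over `n` for `|s| < 1` gives
`P(A i) s^l U(s) = ∑_j w_j(s) g_j(s)`, while `u n - u (n + 1) = ∑_j q j (n + 1)` gives
`(1 - s) U(s) = 1 - ∑_j g_j(s)`; eliminating `U` yields the identity on `(-1, 1)`. The series `g_j`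
converge absolutely, so both sides are continuous on `[-1, 1]` and the identity extends to `±1`. -/

open MeasureTheory ENNReal

noncomputable section

/-- Probability of a single toss outcome: `true` (heads) has probability `p`,
`false` (tails) has probability `1 - p`. -/
def letterP (p : ℝ) (b : Bool) : ℝ := if b then p else 1 - p

/-- Probability of a finite string of tosses (`1` for the empty string). -/
def strP (p : ℝ) (A : List Bool) : ℝ := (A.map (letterP p)).prod

/-- `μ` is the product measure on `{H,T}^ℕ` of i.i.d. coin tosses with heads
probability `p`: every cylinder set has the product probability. -/
def IsCoinMeasure (p : ℝ) (μ : Measure (ℕ → Bool)) : Prop :=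
  ∀ (n : ℕ) (a : Fin n → Bool),
    μ {ξ | ∀ i : Fin n, ξ i = a i} = ENNReal.ofReal (∏ i, letterP p (a i))

/-- The pattern `A` (of length `l`) occurs ending exactly at toss `n`
(toss number `k ≥ 1` of `ξ` is `ξ (k - 1)`): `n ≥ l` and tosses
`n - l + 1, …, n` spell `A`. -/
def occursAt (A : List Bool) (ξ : ℕ → Bool) (n : ℕ) : Prop :=
  A.length ≤ n ∧ (List.ofFn fun k : Fin A.length => ξ (n - A.length + k)) = A

/-- The first toss at which the pattern `A` has occurred (`⊤` if it never occurs). -/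
def hitTime (A : List Bool) (ξ : ℕ → Bool) : ℕ∞ :=
  ⨅ (n : ℕ) (_ : occursAt A ξ n), (n : ℕ∞)

/-- The number of tosses until the `m`-player game ends: the minimum of the
hitting times of the patterns `A i`. -/
def gameTime {m : ℕ} (A : Fin m → List Bool) (ξ : ℕ → Bool) : ℕ∞ :=
  ⨅ i, hitTime (A i) ξ

/-- The correlation polynomial
`w_A^B(s) = Σ_{k=1}^{min(|A|,|B|)} [A_(k) = B^(k)] P(A^(|A|-k)) s^(|A|-k)`,
where `A_(k)` is the prefix of length `k` of `A` and `B^(k)` is the suffix of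
length `k` of `B`. -/
def corrW (p : ℝ) (A B : List Bool) (s : ℝ) : ℝ :=
  ∑ k ∈ Finset.Icc 1 (min A.length B.length),
    (if A.take k = B.drop (B.length - k) then (1 : ℝ) else 0) *
      strP p (A.drop k) * s ^ (A.length - k)

/-- The tosses of `ξ` with (zero-based) indices `n, n + 1, …` spell the word `B`. -/
def spells (B : List Bool) (ξ : ℕ → Bool) (n : ℕ) : Prop :=
  ∀ k (h : k < B.length), ξ (n + k) = B[k]

/-- No pattern has occurred by toss `n`. -/
def noHit {m : ℕ} (A : Fin m → List Bool) (n : ℕ) : Set (ℕ → Bool) :=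
  {ξ | ∀ j, ∀ r ≤ n, ¬ occursAt (A j) ξ r}

/-- The game ends exactly at toss `n`, with an occurrence of `A j`. -/
def wins {m : ℕ} (A : Fin m → List Bool) (j : Fin m) (n : ℕ) : Set (ℕ → Bool) :=
  {ξ | occursAt (A j) ξ n ∧ ∀ j', ∀ r < n, ¬ occursAt (A j') ξ r}

/-! ### Words and occurrences -/

lemma occursAt_iff (A : List Bool) (ξ : ℕ → Bool) (n : ℕ) :
    occursAt A ξ n ↔ A.length ≤ n ∧ spells A ξ (n - A.length) := by
  unfold occursAt spells
  refine and_congr_right fun _ => ?_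
  constructor
  · intro h k hk
    have := congrArg (fun L => L[k]?) h
    simpa [List.getElem?_ofFn, hk] using this
  · intro h
    apply List.ext_getElem
    · simp
    · intro k h1 h2
      simpa using h k h2

lemma spells_infix {A B : List Bool} {ξ : ℕ → Bool} {n t : ℕ} (hA : spells A ξ n)
    (hB : spells B ξ t) (h1 : n ≤ t) (h2 : t + B.length ≤ n + A.length) : B <:+: A := by
  have : B = (A.drop (t - n)).take B.length := by
    apply List.ext_getElem
    · simp; omega
    · intro k h3 h4
      rw [List.getElem_take, List.getElem_drop, ← hB k h3, ← hA (t - n + k) (by omega)]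
      congr 1; omega
  rw [this]
  exact (List.take_prefix _ _).isInfix.trans (List.drop_suffix _ _).isInfix

lemma occursAt_congr {A : List Bool} {ξ ξ' : ℕ → Bool} {n r : ℕ} (hr : r ≤ n)
    (h : ∀ i < n, ξ i = ξ' i) : occursAt A ξ r ↔ occursAt A ξ' r := by
  rw [occursAt_iff, occursAt_iff]
  refine and_congr_right fun h1 => ?_
  unfold spells
  refine forall_congr' fun k => forall_congr' fun hk => ?_
  rw [h _ (by omega)]

lemma le_hitTime_iff (A : List Bool) (ξ : ℕ → Bool) (n : ℕ) :
    (n : ℕ∞) ≤ hitTime A ξ ↔ ∀ r < n, ¬ occursAt A ξ r := by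
  unfold hitTime
  simp only [le_iInf_iff, Nat.cast_le]
  constructor
  · intro h r hr ho
    have := h r ho
    omega
  · intro h r ho
    by_contra hr
    exact h r (by omega) ho

lemma hitTime_le {A : List Bool} {ξ : ℕ → Bool} {n : ℕ} (h : occursAt A ξ n) :
    hitTime A ξ ≤ n := iInf₂_le n h

/-- Translates the `ℕ∞`-valued hitting times of the statement into conditions on occurrences. -/
lemma event_eq_wins {m : ℕ} (A : Fin m → List Bool) (j : Fin m) (n : ℕ) :
    {ξ | gameTime A ξ = (n : ℕ∞) ∧ hitTime (A j) ξ = (n : ℕ∞)} = wins A j n := by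
  ext ξ
  simp only [Set.mem_ofPred_eq, wins]
  constructor
  · rintro ⟨h1, h2⟩
    have h3 : ∀ j', ∀ r < n, ¬ occursAt (A j') ξ r := fun j' =>
      (le_hitTime_iff _ _ _).1 (h1 ▸ iInf_le _ j')
    refine ⟨?_, h3⟩
    by_contra h4
    have h5 : ((n + 1 : ℕ) : ℕ∞) ≤ hitTime (A j) ξ := by
      rw [le_hitTime_iff]
      intro r hr
      rcases Nat.lt_succ_iff_lt_or_eq.1 hr with h | rfl
      · exact h3 j r h
      · exact h4
    rw [h2, Nat.cast_le] at h5
    omega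
  · rintro ⟨h1, h2⟩
    have h3 : (n : ℕ∞) ≤ gameTime A ξ := le_iInf fun j' => (le_hitTime_iff _ _ _).2 (h2 j')
    have h4 : gameTime A ξ ≤ hitTime (A j) ξ := iInf_le _ j
    have h5 := hitTime_le h1
    exact ⟨le_antisymm (h4.trans h5) h3, le_antisymm h5 (h3.trans h4)⟩

/-- At most one player wins, at most once: of two words ending at the same toss, the shorter is a
suffix of the longer. -/
lemma wins_unique {m : ℕ} {A : Fin m → List Bool} (hsub : ∀ i j, i ≠ j → ¬ (A i) <:+: (A j))
    {j j' : Fin m} {n n' : ℕ} {ξ : ℕ → Bool} (h : ξ ∈ wins A j n) (h' : ξ ∈ wins A j' n') :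
    j = j' ∧ n = n' := by
  have hn : n = n' := by
    rcases lt_trichotomy n n' with hl | hl | hl
    · exact absurd h.1 (h'.2 _ _ hl)
    · exact hl
    · exact absurd h'.1 (h.2 _ _ hl)
  subst hn
  refine ⟨?_, rfl⟩
  obtain ⟨a1, a2⟩ := (occursAt_iff _ _ _).1 h.1
  obtain ⟨b1, b2⟩ := (occursAt_iff _ _ _).1 h'.1
  by_contra hne
  rcases le_total (A j).length (A j').length with hl | hl
  · exact hsub _ _ hne (spells_infix b2 a2 (by omega) (by omega))
  · exact hsub _ _ (Ne.symm hne) (spells_infix a2 b2 (by omega) (by omega))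

/-! ### Measure of events determined by finitely many tosses -/

/-- The first `n` tosses. -/
def firstTosses (n : ℕ) (ξ : ℕ → Bool) : Fin n → Bool := fun i => ξ i

lemma measurable_firstTosses (n : ℕ) : Measurable (firstTosses n) :=
  measurable_pi_lambda _ fun _ => measurable_pi_apply _

/-- The event `E` is determined by the first `n` tosses. -/
def Determined (n : ℕ) (E : Set (ℕ → Bool)) : Prop :=
  ∃ S : Set (Fin n → Bool), E = firstTosses n ⁻¹' S

lemma determined_of {n : ℕ} {E : Set (ℕ → Bool)}
    (h : ∀ ξ ξ' : ℕ → Bool, (∀ i < n, ξ i = ξ' i) → ξ ∈ E → ξ' ∈ E) : Determined n E := by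
  refine ⟨firstTosses n '' E, ?_⟩
  ext ξ
  constructor
  · exact fun hξ => ⟨ξ, hξ, rfl⟩
  · rintro ⟨ξ', hξ', he⟩
    exact h ξ' ξ (fun i hi => congrFun he ⟨i, hi⟩) hξ'

lemma Determined.measurableSet {n : ℕ} {E : Set (ℕ → Bool)} (h : Determined n E) :
    MeasurableSet E := by
  obtain ⟨S, rfl⟩ := h
  exact measurable_firstTosses n S.toFinite.measurableSet

lemma determined_noHit {m : ℕ} (A : Fin m → List Bool) (n : ℕ) : Determined n (noHit A n) :=
  determined_of fun _ _ h hξ j r hr ho => hξ j r hr ((occursAt_congr hr h).2 ho)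

lemma determined_wins {m : ℕ} (A : Fin m → List Bool) (j : Fin m) (n : ℕ) :
    Determined n (wins A j n) :=
  determined_of fun _ _ h hξ => ⟨(occursAt_congr le_rfl h).1 hξ.1,
    fun j r hr ho => hξ.2 j r hr ((occursAt_congr hr.le h).2 ho)⟩

lemma determined_spells (B : List Bool) (n : ℕ) :
    Determined (n + B.length) {ξ | spells B ξ n} :=
  determined_of fun ξ ξ' h hξ k hk => by rw [← h _ (by omega)]; exact hξ k hk

lemma letterP_nonneg {p : ℝ} (hp0 : 0 < p) (hp1 : p < 1) (b : Bool) : 0 ≤ letterP p b := by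
  unfold letterP; split_ifs <;> linarith

lemma strP_eq_prod (p : ℝ) (B : List Bool) : strP p B = ∏ k : Fin B.length, letterP p (B.get k) := by
  unfold strP
  simp [← List.prod_ofFn]

lemma measureReal_cylinder {p : ℝ} (hp0 : 0 < p) (hp1 : p < 1) {μ : Measure (ℕ → Bool)}
    (hμ : IsCoinMeasure p μ) (n : ℕ) (a : Fin n → Bool) :
    μ.real {ξ | ∀ i : Fin n, ξ i = a i} = ∏ i, letterP p (a i) := by
  rw [measureReal_def, hμ, ENNReal.toReal_ofReal]
  exact Finset.prod_nonneg fun i _ => letterP_nonneg hp0 hp1 _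

/-- An event about the first `n` tosses is independent of what the following tosses spell. -/
lemma measure_spells {p : ℝ} (hp0 : 0 < p) (hp1 : p < 1) {μ : Measure (ℕ → Bool)}
    [IsProbabilityMeasure μ] (hμ : IsCoinMeasure p μ) {n : ℕ} {E : Set (ℕ → Bool)}
    (hE : Determined n E) (B : List Bool) :
    μ.real (E ∩ {ξ | spells B ξ n}) = μ.real E * strP p B := by
  classical
  have hEm := hE.measurableSet
  obtain ⟨S, rfl⟩ := hE
  have hm : ∀ y ∈ S.toFinset, MeasurableSet (firstTosses n ⁻¹' {y}) := fun y _ =>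
    measurable_firstTosses n (measurableSet_singleton y)
  have h1 := sum_measureReal_preimage_singleton (μ := μ) S.toFinset hm
  have h2 := sum_measureReal_preimage_singleton (μ := μ.restrict {ξ | spells B ξ n}) S.toFinset hm
  rw [Set.coe_toFinset] at h1 h2
  rw [measureReal_restrict_apply hEm] at h2
  rw [← h1, ← h2, Finset.sum_mul]
  refine Finset.sum_congr rfl fun a ha => ?_
  rw [measureReal_restrict_apply (hm a ha)]
  have e1 : firstTosses n ⁻¹' {a} = {ξ | ∀ i : Fin n, ξ i = a i} := by
    ext ξ
    simp [firstTosses, funext_iff]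
  have e2 : firstTosses n ⁻¹' {a} ∩ {ξ | spells B ξ n} =
      {ξ | ∀ i : Fin (n + B.length), ξ i = Fin.append a B.get i} := by
    rw [e1]
    ext ξ
    simp only [Set.mem_inter_iff, Set.mem_ofPred_eq, spells]
    constructor
    · rintro ⟨h3, h4⟩ i
      refine Fin.addCases (fun i => ?_) (fun i => ?_) i
      · simpa using h3 i
      · simpa using h4 i i.2
    · intro h
      refine ⟨fun i => ?_, fun k hk => ?_⟩
      · simpa using h (Fin.castAdd _ i)
      · have h3 := h (Fin.natAdd n ⟨k, hk⟩)
        rw [Fin.append_right] at h3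
        simpa using h3
  rw [e2, e1, measureReal_cylinder hp0 hp1 hμ, measureReal_cylinder hp0 hp1 hμ, strP_eq_prod,
    Fin.prod_univ_add]
  simp

/-! ### The renewal equation -/

/-- Once `A j` has occurred at toss `n + k`, with `k ≤ |A j|`, the tosses from `n` on spell `B` iff
`B` starts with the length-`k` suffix of `A j` and the later tosses spell the rest of `B`. -/
lemma wins_inter_spells {m : ℕ} (A : Fin m → List Bool) (j : Fin m) (B : List Bool) (n k : ℕ)
    (hkB : k ≤ B.length) (hkj : k ≤ (A j).length) :
    wins A j (n + k) ∩ {ξ | spells B ξ n} =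
      if B.take k = (A j).drop ((A j).length - k) then
        wins A j (n + k) ∩ {ξ | spells (B.drop k) ξ (n + k)} else ∅ := by
  -- an occurrence ending at `n + k` fixes the tosses with indices `n, …, n + k - 1`
  have key : ∀ ξ ∈ wins A j (n + k), ∀ (t : ℕ) (ht : t < k),
      ξ (n + t) = (A j)[(A j).length - k + t] := by
    intro ξ hξ t ht
    obtain ⟨h1, h2⟩ := (occursAt_iff _ _ _).1 hξ.1
    rw [← h2 _ (by omega)]
    congr 1; omega
  split_ifs with hm
  · ext ξ
    simp only [Set.mem_inter_iff, Set.mem_ofPred_eq]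
    refine and_congr_right fun hξ => ?_
    constructor
    · intro h t ht
      rw [List.length_drop] at ht
      rw [List.getElem_drop, ← h _ (by omega), add_assoc]
    · intro h t ht
      rcases lt_or_ge t k with hlt | hge
      · rw [key ξ hξ t hlt]
        have h3 : (B.take k)[t]'(by simp; omega) =
            ((A j).drop ((A j).length - k))[t]'(by simp; omega) := by simp only [hm]
        rw [List.getElem_take, List.getElem_drop] at h3
        exact h3.symm
      · have h3 := h (t - k) (by simp; omega)
        rw [List.getElem_drop] at h3
        have e1 : n + k + (t - k) = n + t := by omega
        have e2 : k + (t - k) = t := by omega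
        simpa only [e1, e2] using h3
  · rw [Set.eq_empty_iff_forall_notMem]
    rintro ξ ⟨hξ, h⟩
    apply hm
    apply List.ext_getElem
    · simp; omega
    · intro t h1 h2
      have ht : t < k := by simp at h1; omega
      rw [List.getElem_take, List.getElem_drop, ← key ξ hξ t ht, ← h t (by omega)]

/-- If no pattern has occurred by toss `n` and the next tosses spell `A i`, the game ends `k` tosses
later for some `1 ≤ k ≤ |A i|`; the winning `A j` has `|A j| ≥ k`, for otherwise it would be a
substring of `A i`. -/
lemma noHit_inter_spells {m : ℕ} {A : Fin m → List Bool}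
    (hsub : ∀ i j, i ≠ j → ¬ (A i) <:+: (A j)) (i : Fin m) (n : ℕ) :
    noHit A n ∩ {ξ | spells (A i) ξ n} =
      ⋃ x ∈ (Finset.univ : Finset (Fin m)).sigma
          (fun j => Finset.Icc 1 (min (A i).length (A j).length)),
        wins A x.1 (n + x.2) ∩ {ξ | spells (A i) ξ n} := by
  classical
  ext ξ
  simp only [Set.mem_iUnion, Set.mem_inter_iff, Finset.mem_sigma, Finset.mem_univ, true_and,
    Finset.mem_Icc, Set.mem_ofPred_eq, exists_prop]
  constructor
  · rintro ⟨h0, hA⟩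
    have hex : ∃ r, ∃ j, occursAt (A j) ξ r :=
      ⟨n + (A i).length, i, (occursAt_iff _ _ _).2 ⟨by omega, by simpa using hA⟩⟩
    have hle : Nat.find hex ≤ n + (A i).length :=
      Nat.find_min' hex ⟨i, (occursAt_iff _ _ _).2 ⟨by omega, by simpa using hA⟩⟩
    obtain ⟨j, hj⟩ := Nat.find_spec hex
    have hmin : ∀ j', ∀ r < Nat.find hex, ¬ occursAt (A j') ξ r := fun j' r hr ho =>
      Nat.find_min hex hr ⟨j', ho⟩
    generalize Nat.find hex = r at *
    have hr : n < r := by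
      by_contra hcon
      exact h0 j r (by omega) hj
    obtain ⟨h1, h2⟩ := (occursAt_iff _ _ _).1 hj
    have hrj : r - n ≤ (A j).length := by
      by_contra hcon
      have hinf : A j <:+: A i := spells_infix hA h2 (by omega) (by omega)
      have hji : j = i := by
        by_contra hne
        exact hsub _ _ hne hinf
      subst hji
      omega
    refine ⟨⟨j, r - n⟩, ⟨by dsimp only; omega, by dsimp only; omega⟩, ?_, hA⟩
    have e : n + (r - n) = r := by omega
    dsimp only
    rw [e]
    exact ⟨hj, hmin⟩
  · rintro ⟨⟨j, k⟩, ⟨hk, _⟩, hw, hA⟩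
    exact ⟨fun j' r hr => hw.2 j' r (by dsimp only at *; omega), hA⟩

/-- The probability of `A i` being spelled right after an unfinished game of `n` tosses, split by
the winner `j` and the number `k` of further tosses until the game ends. -/
lemma renewal {p : ℝ} (hp0 : 0 < p) (hp1 : p < 1) {μ : Measure (ℕ → Bool)}
    [IsProbabilityMeasure μ] (hμ : IsCoinMeasure p μ) {m : ℕ} {A : Fin m → List Bool}
    (hsub : ∀ i j, i ≠ j → ¬ (A i) <:+: (A j)) (i : Fin m) (n : ℕ) :
    μ.real (noHit A n) * strP p (A i) =
      ∑ j, ∑ k ∈ Finset.Icc 1 (min (A i).length (A j).length),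
        (if (A i).take k = (A j).drop ((A j).length - k) then (1 : ℝ) else 0) *
          strP p ((A i).drop k) * μ.real (wins A j (n + k)) := by
  rw [← measure_spells hp0 hp1 hμ (determined_noHit A n), noHit_inter_spells hsub,
    measureReal_biUnion_finset, Finset.sum_sigma]
  · refine Finset.sum_congr rfl fun j _ => Finset.sum_congr rfl fun k hk => ?_
    rw [Finset.mem_Icc, le_min_iff] at hk
    dsimp only
    rw [wins_inter_spells A j (A i) n k hk.2.1 hk.2.2]
    split_ifs
    · rw [measure_spells hp0 hp1 hμ (determined_wins A j (n + k))]
      ring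
    · simp
  · rintro ⟨j, k⟩ _ ⟨j', k'⟩ _ hne
    refine Set.disjoint_left.2 fun ξ h h' => hne ?_
    obtain ⟨e1, e2⟩ := wins_unique hsub h.1 h'.1
    dsimp only at e1 e2
    obtain rfl := e1
    obtain rfl : k = k' := by omega
    rfl
  · intro x _
    exact (determined_wins A _ _).measurableSet.inter (determined_spells _ _).measurableSet

lemma noHit_zero {m : ℕ} {A : Fin m → List Bool} (hlen : ∀ i, 1 ≤ (A i).length) :
    noHit A 0 = Set.univ := by
  rw [Set.eq_univ_iff_forall]
  intro ξ j r hr ho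
  have := ho.1
  have := hlen j
  omega

lemma wins_eq_empty {m : ℕ} (A : Fin m → List Bool) (j : Fin m) {n : ℕ}
    (h : n < (A j).length) : wins A j n = ∅ := by
  rw [Set.eq_empty_iff_forall_notMem]
  intro ξ hξ
  have := hξ.1.1
  omega

/-- A game unfinished after toss `n` either stays unfinished or is won at toss `n + 1`. -/
lemma noHit_step {μ : Measure (ℕ → Bool)} [IsProbabilityMeasure μ] {m : ℕ} {A : Fin m → List Bool}
    (hsub : ∀ i j, i ≠ j → ¬ (A i) <:+: (A j)) (n : ℕ) :
    μ.real (noHit A n) = μ.real (noHit A (n + 1)) + ∑ j, μ.real (wins A j (n + 1)) := by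
  have e : noHit A n = noHit A (n + 1) ∪ ⋃ j ∈ (Finset.univ : Finset (Fin m)),
      wins A j (n + 1) := by
    ext ξ
    simp only [Set.mem_union, Set.mem_iUnion, Finset.mem_univ, exists_const]
    constructor
    · intro h
      by_cases hc : ∃ j, occursAt (A j) ξ (n + 1)
      · obtain ⟨j, hj⟩ := hc
        exact Or.inr ⟨j, hj, fun j' r hr => h j' r (by omega)⟩
      · push Not at hc
        refine Or.inl fun j r hr => ?_
        rcases Nat.lt_or_ge n r with hl | hl
        · obtain rfl : r = n + 1 := by omega
          exact hc j
        · exact h j r hl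
    · rintro (h | ⟨j, h⟩) j' r hr
      · exact h j' r (by omega)
      · exact h.2 j' r (by omega)
  have hm : ∀ j ∈ (Finset.univ : Finset (Fin m)), MeasurableSet (wins A j (n + 1)) := fun j _ =>
    (determined_wins A j (n + 1)).measurableSet
  rw [← measureReal_biUnion_finset _ hm, e, measureReal_union _ (Finset.measurableSet_biUnion _ hm)
    (measure_ne_top _ _) (measure_ne_top _ _)]
  · rw [Set.disjoint_left]
    intro ξ h h'
    simp only [Set.mem_iUnion] at h'
    obtain ⟨j, _, hj⟩ := h'
    exact h j _ le_rfl hj.1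
  · intro j _ j' _ hne
    exact Set.disjoint_left.2 fun ξ h h' => hne (wins_unique hsub h h').1

/-! ### Generating functions -/

lemma summable_wins {μ : Measure (ℕ → Bool)} [IsProbabilityMeasure μ] {m : ℕ}
    {A : Fin m → List Bool} (hsub : ∀ i j, i ≠ j → ¬ (A i) <:+: (A j)) (j : Fin m) :
    Summable fun n => μ.real (wins A j n) := by
  refine summable_measure_toReal (fun n => (determined_wins A j n).measurableSet) ?_
  intro n n' hne
  exact Set.disjoint_left.2 fun ξ h h' => hne (wins_unique hsub h h').2

lemma norm_mul_pow_le {a s : ℝ} (ha : 0 ≤ a) (hs : s ∈ Set.Icc (-1 : ℝ) 1) (n : ℕ) :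
    ‖a * s ^ n‖ ≤ a := by
  rw [norm_mul, norm_pow, Real.norm_of_nonneg ha, Real.norm_eq_abs]
  exact mul_le_of_le_one_right ha (pow_le_one₀ (abs_nonneg s) (abs_le.2 hs))

/-- Real-variable core of the identity on `(-1, 1)`: `u` and `q` stand for the survival and winning
probabilities, `c j k` for the coefficients of the correlation polynomials, `L` for the lengths. -/
lemma gf_identity {m : ℕ} {u : ℕ → ℝ} {q : Fin m → ℕ → ℝ} {P : ℝ} {l : ℕ} {L : Fin m → ℕ}
    {c : Fin m → ℕ → ℝ} (hu0 : u 0 = 1) (hu : ∀ n, 0 ≤ u n ∧ u n ≤ 1)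
    (hL : ∀ j, 1 ≤ L j) (hq0 : ∀ j n, n < L j → q j n = 0)
    (hqn : ∀ j n, 0 ≤ q j n) (hq : ∀ j, Summable (q j))
    (hstep : ∀ n, u n = u (n + 1) + ∑ j, q j (n + 1))
    (hren : ∀ n, u n * P = ∑ j, ∑ k ∈ Finset.Icc 1 (min l (L j)), c j k * q j (n + k))
    {s : ℝ} (hs : s ∈ Set.Ioo (-1 : ℝ) 1) :
    P * s ^ l = ∑ j, (∑' n, q j n * s ^ n) *
      (P * s ^ l + (1 - s) * ∑ k ∈ Finset.Icc 1 (min l (L j)), c j k * s ^ (l - k)) := by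
  have hs' := Set.Ioo_subset_Icc_self hs
  have hqs : ∀ j, Summable fun n => q j n * s ^ n := fun j =>
    Summable.of_norm_bounded (hq j) fun n => norm_mul_pow_le (hqn j n) hs' n
  have hus : Summable fun n => u n * s ^ n := by
    refine Summable.of_norm_bounded
      (summable_geometric_of_lt_one (abs_nonneg s) (abs_lt.2 hs)) fun n => ?_
    rw [norm_mul, norm_pow, Real.norm_of_nonneg (hu n).1, Real.norm_eq_abs]
    exact mul_le_of_le_one_left (by positivity) (hu n).2
  -- the first `L j` coefficients of `g_j` vanish, so shifting by `k ≤ L j` loses nothing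
  have hshift : ∀ j k, k ≤ L j →
      HasSum (fun n => q j (n + k) * s ^ (n + k)) (∑' n, q j n * s ^ n) := by
    intro j k hk
    rw [hasSum_nat_add_iff (f := fun n => q j n * s ^ n) k, Finset.sum_eq_zero, add_zero]
    · exact (hqs j).hasSum
    · intro n hn
      rw [hq0 j n ((Finset.mem_range.1 hn).trans_le hk), zero_mul]
  have h1 : (1 - s) * (∑' n, u n * s ^ n) = 1 - ∑ j, ∑' n, q j n * s ^ n := by
    have ha : (∑' n, u n * s ^ n) = 1 + ∑' n, u (n + 1) * s ^ (n + 1) := by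
      rw [hus.tsum_eq_zero_add, hu0]; simp
    have hb : HasSum (fun n => ∑ j, q j (n + 1) * s ^ (n + 1)) (∑ j, ∑' n, q j n * s ^ n) :=
      hasSum_sum fun j _ => hshift j 1 (hL j)
    have hc : HasSum (fun n => s * (u n * s ^ n) - u (n + 1) * s ^ (n + 1))
        (s * (∑' n, u n * s ^ n) - ∑' n, u (n + 1) * s ^ (n + 1)) :=
      (hus.hasSum.mul_left s).sub
        ((summable_nat_add_iff (f := fun n => u n * s ^ n) 1).2 hus).hasSum
    have hd : (fun n => s * (u n * s ^ n) - u (n + 1) * s ^ (n + 1)) =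
        fun n => ∑ j, q j (n + 1) * s ^ (n + 1) := by
      funext n
      rw [← Finset.sum_mul, hstep n]
      ring
    rw [hd] at hc
    have := hb.unique hc
    linarith
  have h2 : P * s ^ l * (∑' n, u n * s ^ n) = ∑ j, (∑' n, q j n * s ^ n) *
      ∑ k ∈ Finset.Icc 1 (min l (L j)), c j k * s ^ (l - k) := by
    have ha : HasSum (fun n => ∑ j, ∑ k ∈ Finset.Icc 1 (min l (L j)),
        c j k * s ^ (l - k) * (q j (n + k) * s ^ (n + k)))
        (∑ j, ∑ k ∈ Finset.Icc 1 (min l (L j)), c j k * s ^ (l - k) * ∑' n, q j n * s ^ n) :=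
      hasSum_sum fun j _ => hasSum_sum fun k hk =>
        (hshift j k ((Finset.mem_Icc.1 hk).2.trans (min_le_right _ _))).mul_left _
    have hb : (fun n => ∑ j, ∑ k ∈ Finset.Icc 1 (min l (L j)),
        c j k * s ^ (l - k) * (q j (n + k) * s ^ (n + k))) =
        fun n => P * s ^ l * (u n * s ^ n) := by
      funext n
      have e : P * s ^ l * (u n * s ^ n) = u n * P * s ^ (n + l) := by ring
      rw [e, hren, Finset.sum_mul]
      refine Finset.sum_congr rfl fun j _ => ?_
      rw [Finset.sum_mul]
      refine Finset.sum_congr rfl fun k hk => ?_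
      have hkl : k ≤ l := (Finset.mem_Icc.1 hk).2.trans (min_le_left _ _)
      have e2 : n + l = (l - k) + (n + k) := by omega
      rw [e2, pow_add]
      ring
    rw [hb] at ha
    rw [(hus.hasSum.mul_left (P * s ^ l)).unique ha]
    refine Finset.sum_congr rfl fun j _ => ?_
    rw [← Finset.sum_mul, mul_comm]
  simp only [mul_add, Finset.sum_add_distrib, mul_left_comm _ (1 - s), ← Finset.sum_mul,
    ← Finset.mul_sum]
  rw [← h2]
  linear_combination (-(P * s ^ l)) * h1

/-- In the `m`-player game, for every `1 ≤ i ≤ m` and every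
`s ∈ [−1,1]`,
`P(A_i) s^{l_i} = Σ_{j=1}^{m} g_τ^{A_j}(s) ⬝ (P(A_i) s^{l_i} + (1 − s) w_{A_i}^{A_j}(s))`,
where `g_τ^{A_j}(s) = Σ_{n≥0} p_n^{A_j} s^n` with `p_n^{A_j} = μ(τ = τ_{A_j} = n)`. -/
theorem multi_g_identity (p : ℝ) (hp0 : 0 < p) (hp1 : p < 1)
    (μ : Measure (ℕ → Bool)) [IsProbabilityMeasure μ] (hμ : IsCoinMeasure p μ)
    (m : ℕ) (hm : 1 ≤ m) (A : Fin m → List Bool) (hlen : ∀ i, 1 ≤ (A i).length)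
    (hsub : ∀ i j, i ≠ j → ¬ (A i) <:+: (A j))
    (i : Fin m) (s : ℝ) (hs : s ∈ Set.Icc (-1 : ℝ) 1) :
    strP p (A i) * s ^ (A i).length =
      ∑ j, (∑' n : ℕ, (μ {ξ | gameTime A ξ = (n : ℕ∞) ∧
              hitTime (A j) ξ = (n : ℕ∞)}).toReal * s ^ n) *
        (strP p (A i) * s ^ (A i).length + (1 - s) * corrW p (A i) (A j) s) := by
  simp only [event_eq_wins, ← measureReal_def]
  have hopen : Set.EqOn (fun s : ℝ => strP p (A i) * s ^ (A i).length)
      (fun s : ℝ => ∑ j, (∑' n : ℕ, μ.real (wins A j n) * s ^ n) *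
        (strP p (A i) * s ^ (A i).length + (1 - s) * corrW p (A i) (A j) s))
      (Set.Ioo (-1) 1) := fun s hs =>
    gf_identity (u := fun n => μ.real (noHit A n)) (L := fun j => (A j).length)
      (by simp [noHit_zero hlen]) (fun n => ⟨measureReal_nonneg, measureReal_le_one⟩) hlen
      (fun j n h => by simp [wins_eq_empty A j h]) (fun _ _ => measureReal_nonneg)
      (summable_wins hsub) (noHit_step hsub) (renewal hp0 hp1 hμ hsub i) hs
  refine hopen.of_subset_closure (t := Set.Icc (-1) 1) ?_ ?_ Set.Ioo_subset_Icc_self ?_ hs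
  · fun_prop
  · refine continuousOn_finsetSum _ fun j _ => ContinuousOn.mul ?_ ?_
    · exact continuousOn_tsum (fun n => by fun_prop) (summable_wins hsub j)
        fun n s hs => norm_mul_pow_le measureReal_nonneg hs n
    · unfold corrW
      fun_prop
  · rw [closure_Ioo (by norm_num)]
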